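/- arXiv:2108.07551 — 2 statements merged into one kernel-verified Lean document; each statement's English description precedes it below -/
import Mathlib

section
/- Let S be a safe separator of a finite simple graph G, i.e., tw(G ∪ K(S)) = tw(G). Then tw(G) is the larger of |S| − 1 and the maximum over the connected components C of G minus S of tw(G[C ∪ S] ∪ K(S)). -/
/-- A tree-decomposition of a graph `G` indexed by nodes of type `ι`. -/
structure TreeDecomp {V : Type} (G : SimpleGraph V) (ι : Type) where
  tree : SimpleGraph ι
  isTree : tree.IsTree
  bag : ι → Finset V
  bags_cover : ∀ v : V, ∃ i : ι, v ∈ bag i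
  edges_covered : ∀ ⦃u v : V⦄, G.Adj u v → ∃ i : ι, u ∈ bag i ∧ v ∈ bag i
  bags_connected : ∀ v : V, (tree.induce {i : ι | v ∈ bag i}).Connected

/-- The treewidth of `G`: the smallest `k` such that `G` has a tree-decomposition
all of whose bags have at most `k + 1` vertices (i.e. of width at most `k`). -/
noncomputable def treewidth {V : Type} (G : SimpleGraph V) : ℕ :=
  sInf { k : ℕ | ∃ (ι : Type) (td : TreeDecomp G ι), ∀ i : ι, (td.bag i).card ≤ k + 1 }

/-- The neighborhood `N_G(C)` of a vertex set `C`. -/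
def nbhd {V : Type} (G : SimpleGraph V) (C : Set V) : Set V :=
  {v : V | v ∉ C ∧ ∃ u ∈ C, G.Adj u v}

/-- `S` separates `a` from `b` in `G`: `a, b ∉ S` and every walk from `a` to `b` meets `S`
(so `a` and `b` lie in distinct components of `G` minus `S`). -/
def Separates {V : Type} (G : SimpleGraph V) (S : Set V) (a b : V) : Prop :=
  a ∉ S ∧ b ∉ S ∧ ∀ p : G.Walk a b, ∃ v ∈ p.support, v ∈ S

/-- `C` is a connected component of `G` minus `S`. -/
def IsCompOf {V : Type} (G : SimpleGraph V) (S : Set V) (C : Set V) : Prop :=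
  C.Nonempty ∧ Disjoint C S ∧ (G.induce C).Connected ∧
    ∀ D : Set V, C ⊆ D → Disjoint D S → (G.induce D).Connected → D = C

/-- `S` is a separator of `G`: `G` minus `S` has more than one connected component. -/
def IsSeparator {V : Type} (G : SimpleGraph V) (S : Set V) : Prop :=
  ∃ C D : Set V, IsCompOf G S C ∧ IsCompOf G S D ∧ C ≠ D

/-- `C` is a full component of `S` in `G`. -/
def IsFullCompOf {V : Type} (G : SimpleGraph V) (S : Set V) (C : Set V) : Prop :=
  IsCompOf G S C ∧ nbhd G C = S

/-- `S` is a minimal separator of `G`: it has at least two full components. -/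
def IsMinSep {V : Type} (G : SimpleGraph V) (S : Set V) : Prop :=
  ∃ C D : Set V, IsFullCompOf G S C ∧ IsFullCompOf G S D ∧ C ≠ D

/-- `R` crosses `S` if `R` separates some pair of vertices of `S`. -/
def Crosses {V : Type} (G : SimpleGraph V) (R S : Set V) : Prop :=
  ∃ a b : V, a ∈ S ∧ b ∈ S ∧ Separates G R a b

/-- `G` is chordal: every cycle with more than 3 vertices has a chord. -/
def IsChordal {V : Type} (G : SimpleGraph V) : Prop :=
  ∀ ⦃v : V⦄ (c : G.Walk v v), c.IsCycle → 3 < c.length →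
    ∃ u w : V, u ∈ c.support ∧ w ∈ c.support ∧ G.Adj u w ∧ s(u, w) ∉ c.edges

/-- `H` is a triangulation of `G`. -/
def IsTriangulationOf {V : Type} (H G : SimpleGraph V) : Prop :=
  IsChordal H ∧ G ≤ H

/-- `H` is a minimal triangulation of `G`. -/
def IsMinimalTriangulationOf {V : Type} (H G : SimpleGraph V) : Prop :=
  IsTriangulationOf H G ∧ ∀ H' : SimpleGraph V, IsTriangulationOf H' G → H' ≤ H → H' = H

/-- `K(S)`: the graph on the same vertex type whose edges join all pairs of
distinct vertices of `S`. -/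
def completeOn {V : Type} (S : Set V) : SimpleGraph V :=
  SimpleGraph.fromRel (fun a b => a ∈ S ∧ b ∈ S)

/-- `s` is a maximal clique of `G`. -/
def IsMaximalClique {V : Type} (G : SimpleGraph V) (s : Set V) : Prop :=
  G.IsClique s ∧ ∀ t : Set V, G.IsClique t → s ⊆ t → s = t

/-- `fill G td`: fill every bag of the tree-decomposition `td` into a clique. -/
def fill {V ι : Type} (G : SimpleGraph V) (td : TreeDecomp G ι) : SimpleGraph V :=
  G ⊔ SimpleGraph.fromRel (fun a b => ∃ i : ι, a ∈ td.bag i ∧ b ∈ td.bag i)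

/-- The nodes of the maximal subtree `T(i,j)` of the tree containing `i` but not `j`
(for adjacent `i`, `j`): the nodes reachable from `i` after deleting the edge `{i, j}`. -/
def sideNodes {V ι : Type} {G : SimpleGraph V} (td : TreeDecomp G ι) (i j : ι) : Set ι :=
  {t : ι | (td.tree.deleteEdges {s(i, j)}).Reachable i t}

/-- `V(i,j)`: the union of the bags of nodes in `T(i,j)`, with the vertices of the
bag of `j` removed. -/
def sideVerts {V ι : Type} {G : SimpleGraph V} (td : TreeDecomp G ι) (i j : ι) : Set V :=
  (⋃ t ∈ sideNodes td i j, (td.bag t : Set V)) \ (td.bag j : Set V)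

/-- A perfect elimination order of `G`. -/
def IsPerfectElimOrder {V : Type} [Fintype V] (G : SimpleGraph V)
    (e : Fin (Fintype.card V) ≃ V) : Prop :=
  ∀ i : Fin (Fintype.card V),
    G.IsClique {u : V | G.Adj (e i) u ∧ ∃ j : Fin (Fintype.card V), i < j ∧ e j = u}

/-- `H` is a minor of `G`, via the branch-set (minor model) characterization. -/
def IsMinorOf {W V : Type} (H : SimpleGraph W) (G : SimpleGraph V) : Prop :=
  ∃ B : W → Set V,
    (∀ w : W, (B w).Nonempty) ∧
    (∀ w : W, (G.induce (B w)).Connected) ∧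
    (Pairwise fun w₁ w₂ : W => Disjoint (B w₁) (B w₂)) ∧
    ∀ ⦃w₁ w₂ : W⦄, H.Adj w₁ w₂ → ∃ a ∈ B w₁, ∃ b ∈ B w₂, G.Adj a b

/-- There is a clique minor of `G` minus `C` rooted on `R`, given by branch sets
`B v ∋ v` for `v ∈ R`: disjoint from `C`, pairwise disjoint, each connected, with an
edge of `G` between every two of them. -/
def HasCliqueMinorRootedAvoiding {V : Type} (G : SimpleGraph V) (R C : Set V) : Prop :=
  ∃ B : R → Set V,
    (∀ v : R, (v : V) ∈ B v) ∧
    (∀ v : R, Disjoint (B v) C) ∧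
    (∀ v : R, (G.induce (B v)).Connected) ∧
    (∀ u v : R, u ≠ v → Disjoint (B u) (B v)) ∧
    (∀ u v : R, u ≠ v → ∃ a ∈ B u, ∃ b ∈ B v, G.Adj a b)

/-- `S` is a minor-safe separator of `G`: for every component `C` of `G` minus `S`,
there is a clique minor of `G` minus `C` rooted on `N_G(C)`. -/
def MinorSafe {V : Type} (G : SimpleGraph V) (S : Set V) : Prop :=
  ∀ C : Set V, IsCompOf G S C → HasCliqueMinorRootedAvoiding G (nbhd G C) C

/-! If `S` is a clique of `H`, some bag of every tree-decomposition of `H` contains `S`: the sets of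
nodes whose bags contain a given vertex are subtrees, those of adjacent vertices meet, and subtrees
of a tree have the Helly property. Hence `|S| - 1 ≤ tw(H)`, and decompositions of the graphs
`H[C ∪ S]`, for `C` a component of `H` minus `S`, can all be attached, at a bag containing `S`, to
one new node with bag `S`. So a graph with a clique `S` has treewidth at most `k` exactly when
`|S| ≤ k + 1` and every `H[C ∪ S]` has treewidth at most `k`. The theorem is the case
`H = G ∪ K(S)`, where safety of `S` replaces `tw(H)` by `tw(G)`. -/

open SimpleGraph Set

/-! ### Subtrees of a tree -/

section Subtrees

variable {α : Type*} {T : SimpleGraph α}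

lemma support_subset_of_isPath_of_isAcyclic (hT : T.IsAcyclic) {X : Set α}
    (hX : (T.induce X).Preconnected) {a b : α} (ha : a ∈ X) (hb : b ∈ X) {p : T.Walk a b}
    (hp : p.IsPath) : ∀ x ∈ p.support, x ∈ X := by
  obtain ⟨q, hq⟩ := (hX ⟨a, ha⟩ ⟨b, hb⟩).exists_isPath
  have hunique : (⟨p, hp⟩ : T.Path a b) =
      ⟨q.map (Embedding.induce X).toHom, hq.map Subtype.val_injective⟩ :=
    (hT.subsingleton_path a b).elim _ _
  have hsupp : p.support = q.support.map (↑) :=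
    (congrArg (fun w : T.Path a b => w.1.support) hunique).trans (Walk.support_map _ _)
  intro x hx
  obtain ⟨y, -, rfl⟩ := List.mem_map.1 (hsupp ▸ hx)
  exact y.2

lemma exists_isPath_mem_imp_eq_end (hT : T.Connected) {X : Set α} (hX : X.Nonempty) (i : α) :
    ∃ j ∈ X, ∃ p : T.Walk i j, p.IsPath ∧ ∀ x ∈ p.support, x ∈ X → x = j := by
  classical
  obtain ⟨j, hj, hmin⟩ := exists_minimalFor_of_wellFoundedLT (· ∈ X) (T.dist i) hX
  obtain ⟨p, hp, hlen⟩ := hT.exists_path_of_dist i j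
  refine ⟨j, hj, p, hp, fun x hx hxX => ?_⟩
  by_contra hne
  have hlt : T.dist i x < T.dist i j :=
    hlen ▸ (dist_le (p.takeUntil x hx)).trans_lt (p.length_takeUntil_lt_length hx hne)
  exact hlt.not_ge (hmin hxX hlt.le)

lemma exists_gate (hT : T.IsTree) {X : Set α} (hX : (T.induce X).Connected) (i : α) :
    ∃ j ∈ X, ∀ Y : Set α, (T.induce Y).Preconnected → i ∈ Y → (X ∩ Y).Nonempty → j ∈ Y := by
  obtain ⟨j, hj, p, hp, hpX⟩ :=
    exists_isPath_mem_imp_eq_end hT.connected (nonempty_coe_sort.1 hX.nonempty) i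
  refine ⟨j, hj, fun Y hY hi ⟨t, htX, htY⟩ => ?_⟩
  obtain ⟨q, hq⟩ := (hT.connected.preconnected j t).exists_isPath
  have hqX := support_subset_of_isPath_of_isAcyclic hT.isAcyclic hX.preconnected hj htX hq
  -- Paths in a tree are unique, so this is the path from `i` to `t` inside `Y`.
  have hpq : (p.append q).IsPath := by
    rw [Walk.isPath_def, Walk.support_append, List.nodup_append']
    refine ⟨hp.support_nodup, hq.support_nodup.tail, fun x hxp hxq => ?_⟩
    obtain rfl := hpX x hxp (hqX x (List.mem_of_mem_tail hxq))
    exact (List.nodup_cons.1 (q.cons_tail_support ▸ hq.support_nodup)).1 hxq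
  exact support_subset_of_isPath_of_isAcyclic hT.isAcyclic hY hi htY hpq j
    ((p.mem_support_append_iff q).2 (Or.inl p.end_mem_support))

theorem helly_of_isTree (hT : T.IsTree) {κ : Type*} (s : Finset κ) {X : κ → Set α}
    (hX : ∀ a ∈ s, (T.induce (X a)).Connected)
    (hmeet : (s : Set κ).Pairwise fun a b => (X a ∩ X b).Nonempty) : ∃ i, ∀ a ∈ s, i ∈ X a := by
  classical
  induction s using Finset.induction_on with
  | empty => exact ⟨hT.connected.nonempty.some, by simp⟩
  | insert a s ha ih =>
    obtain ⟨i, hi⟩ := ih (fun b hb => hX b (Finset.mem_insert_of_mem hb))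
      (hmeet.mono (by simp))
    obtain ⟨j, hj, hgate⟩ := exists_gate hT (hX a (Finset.mem_insert_self a s)) i
    refine ⟨j, Finset.forall_mem_insert .. |>.2 ⟨hj, fun b hb => ?_⟩⟩
    exact hgate (X b) (hX b (Finset.mem_insert_of_mem hb)).preconnected (hi b hb)
      (hmeet (by simp) (by simp [hb]) (ne_of_mem_of_not_mem hb ha).symm)

end Subtrees

/-! ### Joining trees at a new node -/

lemma reachable_map_of_forall_adj {α β : Type*} {G : SimpleGraph α} {H : SimpleGraph β} (f : α → β)
    (hf : ∀ a b, G.Adj a b → H.Reachable (f a) (f b)) {a b : α} (h : G.Reachable a b) :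
    H.Reachable (f a) (f b) := by
  rw [reachable_iff_reflTransGen] at h ⊢
  exact h.lift' f fun a b hab => (reachable_iff_reflTransGen _ _).1 (hf a b hab)

section StarGlue

variable {I : Type*} {ι : I → Type*} (T : ∀ c, SimpleGraph (ι c)) (r : ∀ c, ι c)

/-- Adjacency in `starGlue T r`. -/
inductive StarGlueAdj : Option (Σ c, ι c) → Option (Σ c, ι c) → Prop
  | branch {c : I} {i j : ι c} : (T c).Adj i j → StarGlueAdj (some ⟨c, i⟩) (some ⟨c, j⟩)
  | down (c : I) : StarGlueAdj none (some ⟨c, r c⟩)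
  | up (c : I) : StarGlueAdj (some ⟨c, r c⟩) none

/-- The disjoint union of the graphs `T c` (the branches) together with one new vertex `none`,
the center, joined to the root `r c` of every branch. -/
def starGlue : SimpleGraph (Option (Σ c, ι c)) where
  Adj := StarGlueAdj T r
  symm := ⟨by
    rintro _ _ (h | c | c)
    exacts [.branch h.symm, .up c, .down c]⟩
  loopless := ⟨by
    rintro _ (h | _ | _)
    exact h.ne rfl⟩

variable {T r}

lemma reachable_induce_starGlue_of_preconnected {X : Set (Option (Σ c, ι c))} {c : I}
    (hX : ((T c).induce {i | some ⟨c, i⟩ ∈ X}).Preconnected) {i j : ι c}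
    (hi : some ⟨c, i⟩ ∈ X) (hj : some ⟨c, j⟩ ∈ X) :
    ((starGlue T r).induce X).Reachable ⟨some ⟨c, i⟩, hi⟩ ⟨some ⟨c, j⟩, hj⟩ :=
  reachable_map_of_forall_adj (H := (starGlue T r).induce X)
    (fun x : {i | some (Sigma.mk c i) ∈ X} => ⟨some ⟨c, x.1⟩, x.2⟩)
    (fun _ _ h => Adj.reachable (induce_adj.2 (StarGlueAdj.branch (induce_adj.1 h))))
    (hX ⟨i, hi⟩ ⟨j, hj⟩)

lemma connected_induce_starGlue_of_center_mem {X : Set (Option (Σ c, ι c))} (hnone : none ∈ X)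
    (hroot : ∀ c, some ⟨c, r c⟩ ∈ X)
    (hX : ∀ c, ((T c).induce {i | some ⟨c, i⟩ ∈ X}).Preconnected) :
    ((starGlue T r).induce X).Connected := by
  rw [connected_iff_exists_forall_reachable]
  refine ⟨⟨none, hnone⟩, ?_⟩
  rintro ⟨_ | ⟨c, i⟩, hi⟩
  · rfl
  · have hadj : ((starGlue T r).induce X).Adj ⟨none, hnone⟩ ⟨some ⟨c, r c⟩, hroot c⟩ :=
      StarGlueAdj.down c
    exact hadj.reachable.trans (reachable_induce_starGlue_of_preconnected (hX c) _ _)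

lemma connected_induce_starGlue_of_subset_branch {X : Set (Option (Σ c, ι c))} {c : I}
    (hsub : ∀ x ∈ X, ∃ i, x = some ⟨c, i⟩)
    (hX : ((T c).induce {i | some ⟨c, i⟩ ∈ X}).Connected) :
    ((starGlue T r).induce X).Connected := by
  obtain ⟨i, hi⟩ := hX.nonempty
  rw [connected_iff_exists_forall_reachable]
  refine ⟨⟨_, hi⟩, ?_⟩
  rintro ⟨x, hx⟩
  obtain ⟨j, rfl⟩ := hsub x hx
  exact reachable_induce_starGlue_of_preconnected hX.preconnected _ _

lemma connected_starGlue (hT : ∀ c, (T c).Preconnected) : (starGlue T r).Connected := by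
  rw [← (induceUnivIso (starGlue T r)).connected_iff]
  exact connected_induce_starGlue_of_center_mem (mem_univ _) (fun _ => mem_univ _) fun c =>
    (induceUnivIso (T c)).preconnected_iff.2 (hT c)

lemma isBridge_starGlue_root (c : I) : (starGlue T r).IsBridge s(none, some ⟨c, r c⟩) := by
  rw [isBridge_iff]
  intro h
  let inBranch (x : Option (Σ c, ι c)) : Prop := ∃ i, x = some ⟨c, i⟩
  have hreach : (⊥ : SimpleGraph Prop).Reachable (inBranch none) (inBranch (some ⟨c, r c⟩)) := by
    refine reachable_map_of_forall_adj inBranch (fun a b hab => ?_) h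
    obtain ⟨hab, hne⟩ := deleteEdges_adj.1 hab
    rw [reachable_bot]
    cases hab with
    | @branch d i j h =>
      by_cases hd : d = c
      · subst hd; simp [inBranch]
      · simp [inBranch, hd]
    | down d | up d =>
      have hd : d ≠ c := by rintro rfl; simp at hne
      simp [inBranch, hd]
  simp [inBranch] at hreach

lemma isBridge_starGlue_branch {c : I} {i j : ι c} (hij : (T c).IsBridge s(i, j)) :
    (starGlue T r).IsBridge s(some ⟨c, i⟩, some ⟨c, j⟩) := by
  classical
  rw [isBridge_iff] at hij ⊢
  intro h
  let retract : Option (Σ c, ι c) → ι c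
    | none => r c
    | some ⟨d, k⟩ => if hd : d = c then hd ▸ k else r c
  have hreach : ((T c).deleteEdges {s(i, j)}).Reachable
      (retract (some ⟨c, i⟩)) (retract (some ⟨c, j⟩)) := by
    refine reachable_map_of_forall_adj retract (fun a b hab => ?_) h
    obtain ⟨hab, hne⟩ := deleteEdges_adj.1 hab
    cases hab with
    | @branch d k l hkl =>
      by_cases hd : d = c
      · subst hd
        simpa [retract] using (deleteEdges_adj.2 ⟨hkl, by simpa using hne⟩).reachable
      · simp [retract, hd]
    | down d | up d =>
      by_cases hd : d = c
      · subst hd; simp [retract]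
      · simp [retract, hd]
  exact hij (by simpa [retract] using hreach)

lemma isTree_starGlue (hT : ∀ c, (T c).IsTree) : (starGlue T r).IsTree := by
  refine ⟨connected_starGlue fun c => (hT c).connected.preconnected, ?_⟩
  rw [isAcyclic_iff_forall_adj_isBridge]
  intro a b hab
  cases hab with
  | branch h =>
    exact isBridge_starGlue_branch (isAcyclic_iff_forall_adj_isBridge.1 (hT _).isAcyclic h)
  | down c => exact isBridge_starGlue_root c
  | up c => exact Sym2.eq_swap ▸ isBridge_starGlue_root c

end StarGlue

/-! ### Treewidth bounds -/

section Treewidth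

variable {V W : Type} {G : SimpleGraph V} {H : SimpleGraph W} {k : ℕ}

/-- `G` has a tree-decomposition of width at most `k`. Unlike this, `treewidth G ≤ k` also holds
when `G` has no decomposition of bounded width, since then `treewidth G = sInf ∅ = 0`. -/
def HasTreewidthLE (G : SimpleGraph V) (k : ℕ) : Prop :=
  ∃ (ι : Type) (td : TreeDecomp G ι), ∀ i, (td.bag i).card ≤ k + 1

lemma HasTreewidthLE.mono {l : ℕ} (h : HasTreewidthLE G k) (hkl : k ≤ l) : HasTreewidthLE G l := by
  obtain ⟨ι, td, htd⟩ := h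
  exact ⟨ι, td, fun i => (htd i).trans (by gcongr)⟩

lemma treewidth_le_iff (hG : ∃ l, HasTreewidthLE G l) : treewidth G ≤ k ↔ HasTreewidthLE G k :=
  ⟨fun h => HasTreewidthLE.mono (Nat.sInf_mem hG) h, fun h => Nat.sInf_le h⟩

/-- The tree-decomposition with a single node, whose bag is the whole vertex set. -/
def TreeDecomp.singleBag [Fintype V] (G : SimpleGraph V) : TreeDecomp G Unit where
  tree := ⊥
  isTree := .of_subsingleton
  bag _ := Finset.univ
  bags_cover _ := ⟨(), Finset.mem_univ _⟩
  edges_covered _ _ _ := ⟨(), Finset.mem_univ _, Finset.mem_univ _⟩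
  bags_connected v := by
    have : Nonempty {_i : Unit | v ∈ Finset.univ} := ⟨⟨(), Finset.mem_univ v⟩⟩
    exact IsTree.of_subsingleton.connected

lemma exists_hasTreewidthLE [Finite V] (G : SimpleGraph V) : ∃ k, HasTreewidthLE G k := by
  have := Fintype.ofFinite V
  exact ⟨Fintype.card V, Unit, .singleBag G, fun _ => Nat.le_succ _⟩

/-- The tree-decomposition of `H` induced by one of `G` along a copy of `H` in `G`. -/
noncomputable def TreeDecomp.comap {ι : Type} (td : TreeDecomp G ι) (f : Copy H G) :
    TreeDecomp H ι where
  tree := td.tree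
  isTree := td.isTree
  bag i := (td.bag i).preimage f f.injective.injOn
  bags_cover v := by simpa using td.bags_cover (f v)
  edges_covered u v h := by simpa using td.edges_covered (f.toHom.map_adj h)
  bags_connected v := by
    have hset : {i | v ∈ (td.bag i).preimage f f.injective.injOn} = {i | f v ∈ td.bag i} :=
      ext fun _ => Finset.mem_preimage
    exact hset ▸ td.bags_connected (f v)

lemma HasTreewidthLE.of_isContained (hG : HasTreewidthLE G k) (h : H.IsContained G) :
    HasTreewidthLE H k := by
  classical
  obtain ⟨ι, td, htd⟩ := hG
  obtain ⟨f⟩ := h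
  refine ⟨ι, td.comap f, fun i => ?_⟩
  exact (Finset.card_preimage _ _ f.injective.injOn).trans_le
    ((Finset.card_filter_le _ _).trans (htd i))

lemma TreeDecomp.exists_subset_bag_of_isClique {ι : Type} (td : TreeDecomp G ι) {A : Finset V}
    (hA : G.IsClique A) : ∃ i, A ⊆ td.bag i :=
  helly_of_isTree td.isTree A (fun v _ => td.bags_connected v) fun _ hu _ hv huv =>
    td.edges_covered (hA hu hv huv)

lemma HasTreewidthLE.encard_le_of_isClique (hG : HasTreewidthLE G k) {S : Set V}
    (hS : G.IsClique S) : S.encard ≤ k + 1 := by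
  obtain ⟨ι, td, htd⟩ := hG
  by_contra! hlt
  obtain ⟨A, hAS, hA⟩ := exists_subset_encard_eq (Order.add_one_le_of_lt hlt)
  lift A to Finset V using finite_of_encard_eq_coe (k := k + 1 + 1) hA
  obtain ⟨i, hi⟩ := td.exists_subset_bag_of_isClique (hS.subset hAS)
  have hcard : A.card = k + 1 + 1 := by exact_mod_cast encard_coe_eq_coe_finsetCard A ▸ hA
  have := (Finset.card_le_card hi).trans (htd i)
  omega

end Treewidth

/-! ### Gluing tree-decompositions along a clique -/

section Glue

variable {V I : Type} {ι : I → Type} {G : SimpleGraph V} {S : Finset V} {U : I → Set V}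

/-- The bags of `TreeDecomp.glue`: the center has bag `S`, a node of a branch keeps its bag. -/
def glueBag (S : Finset V) (td : ∀ c, TreeDecomp (G.induce (U c)) (ι c)) :
    Option (Σ c, ι c) → Finset V
  | none => S
  | some ⟨c, i⟩ => ((td c).bag i).map (.subtype _)

variable {td : ∀ c, TreeDecomp (G.induce (U c)) (ι c)}

lemma mem_glueBag_some {c : I} {i : ι c} {v : V} :
    v ∈ glueBag S td (some ⟨c, i⟩) ↔ ∃ hv : v ∈ U c, ⟨v, hv⟩ ∈ (td c).bag i := by
  simp [glueBag]

lemma connected_induce_glueBag_branch {c : I} {v : V} (hv : v ∈ U c) :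
    ((td c).tree.induce {i | v ∈ glueBag S td (some ⟨c, i⟩)}).Connected := by
  have hset : {i | v ∈ glueBag S td (some ⟨c, i⟩)} = {i | ⟨v, hv⟩ ∈ (td c).bag i} :=
    ext fun _ => mem_glueBag_some.trans (exists_prop_of_true hv)
  exact hset ▸ (td c).bags_connected ⟨v, hv⟩

variable (td) in
/-- The tree-decomposition of `G` glued from tree-decompositions of graphs `G[U c]` that pairwise
overlap only in `S`: the tree of each is attached, at a node `r c` whose bag contains `S`, to a new
node with bag `S`. -/
noncomputable def TreeDecomp.glue (r : ∀ c, ι c)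
    (hr : ∀ c, S ⊆ glueBag S td (some ⟨c, r c⟩))
    (hcover : ∀ v, v ∉ S → ∃ c, v ∈ U c)
    (hedge : ∀ u v, u ∉ S → G.Adj u v → ∃ c, u ∈ U c ∧ v ∈ U c)
    (hinter : ∀ c d v, v ∉ S → v ∈ U c → v ∈ U d → c = d) :
    TreeDecomp G (Option (Σ c, ι c)) where
  tree := starGlue (fun c => (td c).tree) r
  isTree := isTree_starGlue fun c => (td c).isTree
  bag := glueBag S td
  bags_cover v := by
    by_cases hv : v ∈ S
    · exact ⟨none, hv⟩
    · obtain ⟨c, hvc⟩ := hcover v hv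
      obtain ⟨i, hi⟩ := (td c).bags_cover ⟨v, hvc⟩
      exact ⟨some ⟨c, i⟩, mem_glueBag_some.2 ⟨hvc, hi⟩⟩
  edges_covered u v huv := by
    by_cases hS : u ∈ S ∧ v ∈ S
    · exact ⟨none, hS⟩
    · obtain ⟨c, hu, hv⟩ : ∃ c, u ∈ U c ∧ v ∈ U c := by
        rcases not_and_or.1 hS with hu | hv
        · exact hedge u v hu huv
        · exact (hedge v u hv huv.symm).imp fun _ => And.symm
      obtain ⟨i, hui, hvi⟩ := (td c).edges_covered (u := ⟨u, hu⟩) (v := ⟨v, hv⟩) huv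
      exact ⟨some ⟨c, i⟩, mem_glueBag_some.2 ⟨hu, hui⟩, mem_glueBag_some.2 ⟨hv, hvi⟩⟩
  bags_connected v := by
    by_cases hv : v ∈ S
    · refine connected_induce_starGlue_of_center_mem hv (fun c => hr c hv) fun c => ?_
      obtain ⟨hvc, -⟩ := mem_glueBag_some.1 (hr c hv)
      exact (connected_induce_glueBag_branch hvc).preconnected
    · obtain ⟨c, hvc⟩ := hcover v hv
      refine connected_induce_starGlue_of_subset_branch (c := c) ?_
        (connected_induce_glueBag_branch hvc)
      rintro (_ | ⟨d, i⟩) hi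
      · exact absurd hi hv
      · obtain ⟨hvd, -⟩ := mem_glueBag_some.1 hi
        obtain rfl := hinter c d v hv hvc hvd
        exact ⟨i, rfl⟩

lemma hasTreewidthLE_of_forall_induce {k : ℕ} (hS : G.IsClique S) (hcard : S.card ≤ k + 1)
    (hsub : ∀ c, (S : Set V) ⊆ U c)
    (hcover : ∀ v, v ∉ S → ∃ c, v ∈ U c)
    (hedge : ∀ u v, u ∉ S → G.Adj u v → ∃ c, u ∈ U c ∧ v ∈ U c)
    (hinter : ∀ c d v, v ∉ S → v ∈ U c → v ∈ U d → c = d)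
    (hU : ∀ c, HasTreewidthLE (G.induce (U c)) k) : HasTreewidthLE G k := by
  choose ι td htd using hU
  have hroot : ∀ c, ∃ i, S ⊆ glueBag S td (some ⟨c, i⟩) := by
    classical
    intro c
    have hclique : (G.induce (U c)).IsClique (S.subtype (· ∈ U c)) := by
      intro u hu v hv huv
      exact hS (by simpa using hu) (by simpa using hv) (Subtype.coe_ne_coe.2 huv)
    obtain ⟨i, hi⟩ := (td c).exists_subset_bag_of_isClique hclique
    exact ⟨i, fun v hv => mem_glueBag_some.2 ⟨hsub c hv, hi (by simpa using hv)⟩⟩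
  choose r hr using hroot
  refine ⟨_, .glue td r hr hcover hedge hinter, ?_⟩
  rintro (_ | ⟨c, i⟩)
  · exact hcard
  · exact (Finset.card_map _).trans_le (htd c i)

end Glue

/-! ### Clique separators -/

section CliqueSeparator

variable {V : Type} {G : SimpleGraph V} {S C D : Set V}

lemma exists_isCompOf_mem (G : SimpleGraph V) {v : V} (hv : v ∉ S) :
    ∃ C, IsCompOf G S C ∧ v ∈ C := by
  let 𝒟 : Set (Set V) := {D | v ∈ D ∧ Disjoint D S ∧ (G.induce D).Connected}
  have hsingleton : {v} ∈ 𝒟 := ⟨rfl, by simpa using hv, IsTree.of_subsingleton.connected⟩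
  have hvC : v ∈ ⋃₀ 𝒟 := ⟨_, hsingleton, rfl⟩
  refine ⟨⋃₀ 𝒟, ⟨⟨v, hvC⟩, disjoint_sUnion_left.2 fun D hD => hD.2.1, ?_, ?_⟩, hvC⟩
  · exact induce_sUnion_connected_of_pairwise_not_disjoint ⟨_, hsingleton⟩
      (fun hD hE => ⟨v, hD.1, hE.1⟩) fun hD => hD.2.2
  · exact fun D hCD hDS hD =>
      (subset_sUnion_of_mem (show D ∈ 𝒟 from ⟨hCD hvC, hDS, hD⟩)).antisymm hCD

lemma IsCompOf.eq_of_mem (hC : IsCompOf G S C) (hD : IsCompOf G S D) {v : V} (hvC : v ∈ C)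
    (hvD : v ∈ D) : C = D := by
  obtain ⟨-, hCS, hCconn, hCmax⟩ := hC
  obtain ⟨-, hDS, hDconn, hDmax⟩ := hD
  have hconn := induce_union_connected hCconn.preconnected hDconn.preconnected ⟨v, hvC, hvD⟩
  have hdisj := hCS.union_left hDS
  exact (hCmax _ subset_union_left hdisj hconn).symm.trans
    (hDmax _ subset_union_right hdisj hconn)

lemma IsCompOf.mem_union_of_adj (hC : IsCompOf G S C) {u v : V} (hu : u ∈ C) (huv : G.Adj u v) :
    v ∈ C ∪ S := by
  obtain ⟨-, hCS, hCconn, hCmax⟩ := hC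
  refine or_iff_not_imp_right.2 fun hv => ?_
  have hconn := induce_union_connected hCconn.preconnected
    (induce_pair_connected_of_adj huv).preconnected ⟨u, hu, by simp⟩
  have hdisj : Disjoint (C ∪ {u, v}) S :=
    hCS.union_left (by simp [hv, Set.disjoint_left.1 hCS hu])
  exact hCmax _ subset_union_left hdisj hconn ▸ (by simp)

theorem hasTreewidthLE_iff_of_isClique {k : ℕ} (hS : G.IsClique S) :
    HasTreewidthLE G k ↔
      S.encard ≤ k + 1 ∧ ∀ C, IsCompOf G S C → HasTreewidthLE (G.induce (C ∪ S)) k := by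
  refine ⟨fun h => ⟨h.encard_le_of_isClique hS, fun C _ => h.of_isContained ⟨.induce G _⟩⟩, ?_⟩
  rintro ⟨hcard, hcomp⟩
  lift S to Finset V using finite_of_encard_le_coe (k := k + 1) hcard
  refine hasTreewidthLE_of_forall_induce (U := fun C : {C // IsCompOf G S C} => C.1 ∪ S) hS
    (by exact_mod_cast encard_coe_eq_coe_finsetCard S ▸ hcard) (fun _ => subset_union_right)
    ?_ ?_ ?_ fun C => hcomp C.1 C.2
  · intro v hv
    obtain ⟨C, hC, hvC⟩ := exists_isCompOf_mem G hv
    exact ⟨⟨C, hC⟩, Or.inl hvC⟩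
  · intro u v hu huv
    obtain ⟨C, hC, huC⟩ := exists_isCompOf_mem G hu
    exact ⟨⟨C, hC⟩, Or.inl huC, hC.mem_union_of_adj huC huv⟩
  · rintro ⟨C, hC⟩ ⟨D, hD⟩ v hv hvC hvD
    exact Subtype.ext (hC.eq_of_mem hD (hvC.resolve_right hv) (hvD.resolve_right hv))

theorem treewidth_eq_max_of_isClique (hS : G.IsClique S) (hG : ∃ k, HasTreewidthLE G k) :
    treewidth G = max (S.ncard - 1)
      (sSup {k : ℕ | ∃ C, IsCompOf G S C ∧ k = treewidth (G.induce (C ∪ S))}) := by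
  have hpart : ∀ C, ∃ k, HasTreewidthLE (G.induce (C ∪ S)) k := fun C =>
    hG.imp fun _ h => h.of_isContained ⟨.induce G _⟩
  have hbdd : BddAbove {k : ℕ | ∃ C, IsCompOf G S C ∧ k = treewidth (G.induce (C ∪ S))} := by
    obtain ⟨l, hl⟩ := hG
    refine ⟨l, ?_⟩
    rintro _ ⟨C, -, rfl⟩
    exact (treewidth_le_iff (hpart C)).2 (hl.of_isContained ⟨.induce G _⟩)
  have hfin : S.Finite := by
    obtain ⟨l, hl⟩ := hG
    exact finite_of_encard_le_coe (k := l + 1) (hl.encard_le_of_isClique hS)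
  refine eq_of_forall_ge_iff fun k => ?_
  have hcard : S.encard ≤ k + 1 ↔ S.ncard - 1 ≤ k := by
    rw [← hfin.cast_ncard_eq, tsub_le_iff_right]
    norm_cast
  rw [treewidth_le_iff hG, hasTreewidthLE_iff_of_isClique hS, hcard, max_le_iff,
    csSup_le_iff' hbdd]
  refine and_congr_right' ⟨?_, fun h C hC => (treewidth_le_iff (hpart C)).1 (h _ ⟨C, hC, rfl⟩)⟩
  rintro h _ ⟨C, hC, rfl⟩
  exact (treewidth_le_iff (hpart C)).2 (h C hC)

end CliqueSeparator

/-! ### Completing a set of vertices -/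

section CompleteOn

variable {V : Type} {G : SimpleGraph V} {S : Set V}

lemma completeOn_adj {a b : V} : (completeOn S).Adj a b ↔ a ≠ b ∧ a ∈ S ∧ b ∈ S := by
  rw [completeOn, fromRel_adj, and_comm (a := b ∈ S), or_self]

lemma isClique_sup_completeOn (G : SimpleGraph V) (S : Set V) : (G ⊔ completeOn S).IsClique S :=
  fun _ ha _ hb hab => Or.inr (completeOn_adj.2 ⟨hab, ha, hb⟩)

lemma induce_sup_completeOn (G : SimpleGraph V) (S U : Set V) :
    (G ⊔ completeOn S).induce U = G.induce U ⊔ completeOn {x : U | (x : V) ∈ S} := by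
  ext a b
  simp [completeOn_adj, Subtype.ext_iff]

lemma induce_sup_completeOn_of_disjoint {D : Set V} (hD : Disjoint D S) :
    (G ⊔ completeOn S).induce D = G.induce D := by
  ext a b
  simp [completeOn_adj, Set.disjoint_left.1 hD a.2]

lemma isCompOf_sup_completeOn {C : Set V} : IsCompOf (G ⊔ completeOn S) S C ↔ IsCompOf G S C := by
  refine and_congr_right' (and_congr_right fun hC => and_congr ?_ ?_)
  · rw [induce_sup_completeOn_of_disjoint hC]
  · refine forall₃_congr fun D _ hD => ?_
    rw [induce_sup_completeOn_of_disjoint hD]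

end CompleteOn

theorem treewidth_safe_separator_general {V : Type} (G : SimpleGraph V) (S : Set V)
    (hbdd : ∃ k, HasTreewidthLE (G ⊔ completeOn S) k) :
    treewidth (G ⊔ completeOn S) = max (S.ncard - 1)
      (sSup {k : ℕ | ∃ C : Set V, IsCompOf G S C ∧
        k = treewidth ((G.induce (C ∪ S)) ⊔
              completeOn {x : ↑(C ∪ S) | (x : V) ∈ S})}) := by
  simpa only [isCompOf_sup_completeOn, induce_sup_completeOn] using
    treewidth_eq_max_of_isClique (isClique_sup_completeOn G S) hbdd

/-- if `S` is a safe separator of `G`, then `tw(G)` is the larger of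
`|S| - 1` and the maximum over components `C` of `G - S` of `tw(G[C ∪ S] ∪ K(S))`. -/
theorem treewidth_safe_separator {V : Type} [Fintype V] (G : SimpleGraph V)
    (S : Set V) (hsep : IsSeparator G S)
    (hsafe : treewidth (G ⊔ completeOn S) = treewidth G) :
    treewidth G = max (S.ncard - 1)
      (sSup {k : ℕ | ∃ C : Set V, IsCompOf G S C ∧
        k = treewidth ((G.induce (C ∪ S)) ⊔
              completeOn {x : ↑(C ∪ S) | (x : V) ∈ S})}) := by
  rw [← hsafe]
  exact treewidth_safe_separator_general G S (exists_hasTreewidthLE _)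
end

section
/- If S is an almost-clique minimal separator of a finite simple graph G, then S is minor-safe: for every connected component C of G minus S, there is a clique minor of G minus C rooted on N_G(C). -/
/-! Let `C` be a component of `G` minus `S`. One of the two full components of `S`, say `D`, differs
from `C`, so it is disjoint from `C`, and every vertex of `N_G(C) ⊆ S` has a neighbor in `D`.
If the exceptional vertex `q` lies in `N_G(C)`, contracting `D` into `q` makes `q` adjacent to all
other vertices of `N_G(C)`, which already form a clique; otherwise `N_G(C)` is itself a clique. -/

section Components

variable {V : Type} {G : SimpleGraph V} {S C D : Set V}

theorem disjoint_nbhd_self (G : SimpleGraph V) (C : Set V) : Disjoint (nbhd G C) C :=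
  Set.disjoint_left.mpr fun _ hv => hv.1

theorem connected_induce_insert_of_mem_nbhd {v : V} (hD : (G.induce D).Preconnected)
    (hv : v ∈ nbhd G D) : (G.induce (insert v D)).Connected := by
  obtain ⟨-, d, hd, hdv⟩ := hv
  have hsingleton : (G.induce {v}).Preconnected := .of_subsingleton
  exact SimpleGraph.connected_induce_union hsingleton hD rfl hd hdv.symm

theorem IsCompOf.subset_of_not_disjoint (hC : IsCompOf G S C) (hD : (G.induce D).Preconnected)
    (hDS : Disjoint D S) (hCD : ¬Disjoint C D) : D ⊆ C := by
  obtain ⟨-, hCS, hCconn, hCmax⟩ := hC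
  have hunion : (G.induce (C ∪ D)).Connected :=
    SimpleGraph.induce_union_connected hCconn.preconnected hD
      (Set.not_disjoint_iff_nonempty_inter.mp hCD)
  exact Set.union_eq_left.mp (hCmax _ Set.subset_union_left (hCS.union_left hDS) hunion)

theorem IsCompOf.disjoint_of_ne (hC : IsCompOf G S C) (hD : IsCompOf G S D) (hne : C ≠ D) :
    Disjoint C D := by
  by_contra hCD
  have hDsubC : D ⊆ C := hC.subset_of_not_disjoint hD.2.2.1.preconnected hD.2.1 hCD
  have hCsubD : C ⊆ D :=
    hD.subset_of_not_disjoint hC.2.2.1.preconnected hC.2.1 fun h => hCD h.symm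
  exact hne (hCsubD.antisymm hDsubC)

theorem IsCompOf.nbhd_subset (hC : IsCompOf G S C) : nbhd G C ⊆ S := by
  rintro v ⟨hvC, u, huC, huv⟩
  by_contra hvS
  have huvS : Disjoint {u, v} S := by
    simp only [Set.disjoint_insert_left, Set.disjoint_singleton_left]
    exact ⟨Set.disjoint_left.mp hC.2.1 huC, hvS⟩
  have huvC : ¬Disjoint C {u, v} := Set.not_disjoint_iff.mpr ⟨u, huC, Set.mem_insert u {v}⟩
  have hsub : {u, v} ⊆ C :=
    hC.subset_of_not_disjoint (G.induce_pair_connected_of_adj huv).preconnected huvS huvC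
  exact hvC (hsub (Set.mem_insert_of_mem u rfl))

theorem IsMinSep.exists_isFullCompOf_ne (hS : IsMinSep G S) (C : Set V) :
    ∃ D, IsFullCompOf G S D ∧ D ≠ C := by
  obtain ⟨D₁, D₂, hD₁, hD₂, hne⟩ := hS
  by_cases h : D₁ = C
  · exact ⟨D₂, hD₂, h ▸ hne.symm⟩
  · exact ⟨D₁, hD₁, h⟩

end Components

section ContractionBranchSet

/-- The branch set of `v` when `D` is contracted into `q`: it is `{v}`, together with `D`
if `v = q`. As `v` ranges over `N_G(C)`, these sets model the rooted clique minor. -/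
def contractionBranchSet {V : Type*} (D : Set V) (q v : V) : Set V :=
  {x | x = v ∨ v = q ∧ x ∈ D}

variable {V : Type*} {D : Set V} {q u v : V}

theorem mem_contractionBranchSet_self (D : Set V) (q v : V) : v ∈ contractionBranchSet D q v :=
  Or.inl rfl

theorem contractionBranchSet_self (D : Set V) (q : V) :
    contractionBranchSet D q q = insert q D :=
  Set.ext fun _ => or_congr_right (and_iff_right rfl)

theorem contractionBranchSet_of_ne (h : v ≠ q) : contractionBranchSet D q v = {v} :=
  Set.ext fun _ => or_iff_left fun hx => h hx.1

theorem contractionBranchSet_subset (D : Set V) (q v : V) :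
    contractionBranchSet D q v ⊆ insert v D :=
  fun _ => Or.imp_right And.right

theorem disjoint_contractionBranchSet (hu : u ∉ D) (hv : v ∉ D) (huv : u ≠ v) :
    Disjoint (contractionBranchSet D q u) (contractionBranchSet D q v) := by
  rw [Set.disjoint_left]
  rintro x (rfl | ⟨rfl, hxD⟩) (rfl | ⟨rfl, hxD'⟩)
  · exact huv rfl
  · exact hu hxD'
  · exact hv hxD
  · exact huv rfl

end ContractionBranchSet

section CliqueMinor

variable {V : Type} {G : SimpleGraph V} {R C D : Set V} {q u v : V}

theorem connected_induce_contractionBranchSet (hD : (G.induce D).Preconnected)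
    (hv : v ∈ nbhd G D) : (G.induce (contractionBranchSet D q v)).Connected := by
  obtain rfl | hvq := eq_or_ne v q
  · rw [contractionBranchSet_self]
    exact connected_induce_insert_of_mem_nbhd hD hv
  · rw [contractionBranchSet_of_ne hvq]
    exact .of_subsingleton

theorem exists_adj_contractionBranchSet (hu : u ∈ nbhd G D) (hv : v ∈ nbhd G D)
    (huv : u ≠ q → v ≠ q → G.Adj u v) :
    ∃ a ∈ contractionBranchSet D q u, ∃ b ∈ contractionBranchSet D q v, G.Adj a b := by
  obtain ⟨-, d, hd, hdu⟩ := hu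
  obtain ⟨-, e, he, hev⟩ := hv
  by_cases huq : u = q
  · exact ⟨e, Or.inr ⟨huq, he⟩, v, mem_contractionBranchSet_self D q v, hev⟩
  by_cases hvq : v = q
  · exact ⟨u, mem_contractionBranchSet_self D q u, d, Or.inr ⟨hvq, hd⟩, hdu.symm⟩
  exact ⟨u, mem_contractionBranchSet_self D q u, v, mem_contractionBranchSet_self D q v,
    huv huq hvq⟩

theorem hasCliqueMinorRootedAvoiding_of_subset_nbhd (hD : (G.induce D).Preconnected)
    (hRD : R ⊆ nbhd G D) (hq : G.IsClique (R \ {q})) (hRC : Disjoint R C) (hDC : Disjoint D C) :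
    HasCliqueMinorRootedAvoiding G R C := by
  refine ⟨fun v => contractionBranchSet D q v, fun v => mem_contractionBranchSet_self D q v,
    fun v => ?avoids, fun v => connected_induce_contractionBranchSet hD (hRD v.2),
    fun u v huv => ?disjoint, fun u v huv => ?adjacent⟩
  case avoids =>
    have hinsert : Disjoint (insert (v : V) D) C :=
      Set.disjoint_insert_left.mpr ⟨Set.disjoint_left.mp hRC v.2, hDC⟩
    exact hinsert.mono_left (contractionBranchSet_subset D q v)
  case disjoint =>
    exact disjoint_contractionBranchSet (hRD u.2).1 (hRD v.2).1 (Subtype.coe_ne_coe.mpr huv)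
  case adjacent =>
    exact exists_adj_contractionBranchSet (hRD u.2) (hRD v.2) fun huq hvq =>
      hq ⟨u.2, huq⟩ ⟨v.2, hvq⟩ (Subtype.coe_ne_coe.mpr huv)

end CliqueMinor

theorem minorSafe_of_almostClique_minSep_general {V : Type} {G : SimpleGraph V} {S : Set V}
    {q : V} (hq : G.IsClique (S \ {q})) (hS : IsMinSep G S) : MinorSafe G S := by
  intro C hC
  obtain ⟨D, ⟨hD, hDS⟩, hDC⟩ := hS.exists_isFullCompOf_ne C
  have hCS : nbhd G C ⊆ S := hC.nbhd_subset
  exact hasCliqueMinorRootedAvoiding_of_subset_nbhd hD.2.2.1.preconnected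
    (hDS.symm ▸ hCS) (hq.subset (Set.sdiff_subset_sdiff_left hCS)) (disjoint_nbhd_self G C)
    (hD.disjoint_of_ne hC hDC)

/-- an almost-clique minimal separator is minor-safe. -/
theorem minorSafe_of_almostClique_minSep {V : Type} [Fintype V] (G : SimpleGraph V)
    (S : Set V) (hac : ∃ q ∈ S, G.IsClique (S \ {q})) (hminsep : IsMinSep G S) :
    MinorSafe G S := by
  obtain ⟨q, -, hq⟩ := hac
  exact minorSafe_of_almostClique_minSep_general hq hminsep
end
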